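/- arXiv:2505.10470 — 3 statements merged into one kernel-verified Lean document; each statement's English description precedes it below -/
import Mathlib

section
/- Let n ≥ 2, let c, x ∈ ℝⁿ and r, p > 0 with |c − x| > p + r, set v = (p/(p+r))·c + (r/(p+r))·x (the vertex of the double cone tangent to both balls), and let w ∈ ℝⁿ with |w| = 1. Then the hyperplane H[w; ⟪w,v⟫] through v separates B[c,r] and B[x,p] if and only if there exists some b ∈ ℝ such that H[w;b] separates B[c,r] and B[x,p]; equivalently, H[w; ⟪w,v⟫] separates the two balls if and only if |⟪w, (c − x)/|c − x|⟫| ≥ (p + r)/|c − x|. (Thus the choice of bias b = ⟪w,v⟫ is optimal.) -/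
open MeasureTheory Metric Real
open scoped RealInnerProductSpace

/-- `H[w;b]` separates `B[c,r]` and `B[x,p]`: the linear functional `u ↦ ⟪w,u⟫ - b`
is positive on one open ball and negative on the other. -/
def Separates {n : ℕ} (w : EuclideanSpace ℝ (Fin n)) (b : ℝ)
    (c : EuclideanSpace ℝ (Fin n)) (r : ℝ)
    (x : EuclideanSpace ℝ (Fin n)) (p : ℝ) : Prop :=
  ((∀ u ∈ ball c r, 0 < ⟪w, u⟫ - b) ∧ (∀ u ∈ ball x p, ⟪w, u⟫ - b < 0)) ∨
  ((∀ u ∈ ball c r, ⟪w, u⟫ - b < 0) ∧ (∀ u ∈ ball x p, 0 < ⟪w, u⟫ - b))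

/-!
The functional `⟪w, ·⟫` maps the ball of radius `r` about `c` onto the open interval of radius
`r * ‖w‖` about `⟪w, c⟫`. A threshold `b` between the images of the two balls therefore exists iff
the centres `⟪w, c⟫` and `⟪w, x⟫` are at least `(p + r) * ‖w‖` apart. The vertex of the cone divides
the segment from `c` to `x` in the ratio `r : p`, so its image divides the gap between the image
centres in the same ratio and is then always such a threshold.
-/

section InnerProductSpace

variable {E : Type*} [NormedAddCommGroup E] [InnerProductSpace ℝ E] {w c x : E} {b r p : ℝ}

/-- The hyperplane `{u | ⟪w, u⟫ = b}` separates `s` and `t` strictly: `⟪w, ·⟫ - b` is positive on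
one of the sets and negative on the other. On two balls of a Euclidean space this unfolds to
`Separates`. -/
def HyperplaneSeparates (w : E) (b : ℝ) (s t : Set E) : Prop :=
  ((∀ u ∈ s, 0 < ⟪w, u⟫ - b) ∧ ∀ u ∈ t, ⟪w, u⟫ - b < 0) ∨
    ((∀ u ∈ s, ⟪w, u⟫ - b < 0) ∧ ∀ u ∈ t, 0 < ⟪w, u⟫ - b)

/-- The vertex of the double cone tangent to the balls `ball c r` and `ball x p`: the point dividing
the segment from `c` to `x` in the ratio `r : p`. -/
noncomputable def tangentConeVertex (c : E) (r : ℝ) (x : E) (p : ℝ) : E :=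
  (p / (p + r)) • c + (r / (p + r)) • x

theorem sub_tangentConeVertex (c x : E) (h : p + r ≠ 0) :
    c - tangentConeVertex c r x p = (r / (p + r)) • (c - x) := by
  rw [tangentConeVertex]
  match_scalars <;> field_simp
  ring

theorem tangentConeVertex_sub (c x : E) (h : p + r ≠ 0) :
    tangentConeVertex c r x p - x = (p / (p + r)) • (c - x) := by
  rw [tangentConeVertex]
  match_scalars <;> field_simp
  ring

theorem forall_mem_ball_lt_inner_iff (hw : w ≠ 0) (hr : 0 < r) :
    (∀ u ∈ ball c r, b < ⟪w, u⟫) ↔ r * ‖w‖ ≤ ⟪w, c⟫ - b := by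
  constructor
  · intro h
    by_contra! hlt
    have center_pos : 0 < ⟪w, c⟫ - b := sub_pos.mpr (h c (mem_ball_self hr))
    let perpFoot : E := c - ((⟪w, c⟫ - b) / ‖w‖ ^ 2) • w
    have perpFoot_mem : perpFoot ∈ ball c r := by
      rw [mem_ball_iff_norm, sub_sub_cancel_left, norm_neg, norm_smul,
        Real.norm_of_nonneg (by positivity), div_mul_eq_mul_div, div_lt_iff₀ (by positivity)]
      calc (⟪w, c⟫ - b) * ‖w‖ < r * ‖w‖ * ‖w‖ := by gcongr
        _ = r * ‖w‖ ^ 2 := by ring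
    have inner_perpFoot : ⟪w, perpFoot⟫ = b := by
      rw [inner_sub_right, inner_smul_right, real_inner_self_eq_norm_sq,
        div_mul_cancel₀ _ (by positivity), sub_sub_cancel]
    exact (h perpFoot perpFoot_mem).ne' inner_perpFoot
  · intro h u hu
    have : ⟪w, c⟫ - ⟪w, u⟫ < ⟪w, c⟫ - b :=
      calc ⟪w, c⟫ - ⟪w, u⟫ = ⟪w, c - u⟫ := (inner_sub_right w c u).symm
        _ ≤ ‖w‖ * ‖c - u‖ := real_inner_le_norm w (c - u)
        _ < ‖w‖ * r := by gcongr; exact mem_ball_iff_norm'.mp hu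
        _ ≤ ⟪w, c⟫ - b := by rwa [mul_comm]
    linarith

theorem forall_mem_ball_inner_lt_iff (hw : w ≠ 0) (hr : 0 < r) :
    (∀ u ∈ ball c r, ⟪w, u⟫ < b) ↔ r * ‖w‖ ≤ b - ⟪w, c⟫ := by
  have h := forall_mem_ball_lt_inner_iff (c := c) (b := -b) (neg_ne_zero.mpr hw) hr
  simpa only [inner_neg_left, neg_lt_neg_iff, norm_neg, neg_sub_neg] using h

theorem hyperplaneSeparates_ball_iff (hw : w ≠ 0) (hr : 0 < r) (hp : 0 < p) :
    HyperplaneSeparates w b (ball c r) (ball x p) ↔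
      (r * ‖w‖ ≤ ⟪w, c⟫ - b ∧ p * ‖w‖ ≤ b - ⟪w, x⟫) ∨
        (r * ‖w‖ ≤ b - ⟪w, c⟫ ∧ p * ‖w‖ ≤ ⟪w, x⟫ - b) := by
  simp only [HyperplaneSeparates, sub_pos, sub_neg, forall_mem_ball_lt_inner_iff hw hr,
    forall_mem_ball_lt_inner_iff hw hp, forall_mem_ball_inner_lt_iff hw hr,
    forall_mem_ball_inner_lt_iff hw hp]

theorem HyperplaneSeparates.le_abs_inner (hw : w ≠ 0) (hr : 0 < r) (hp : 0 < p)
    (h : HyperplaneSeparates w b (ball c r) (ball x p)) :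
    (p + r) * ‖w‖ ≤ |⟪w, c - x⟫| := by
  rw [inner_sub_right, le_abs]
  rcases (hyperplaneSeparates_ball_iff hw hr hp).mp h with ⟨hc, hx⟩ | ⟨hc, hx⟩
  · left; linarith
  · right; linarith

theorem hyperplaneSeparates_tangentConeVertex (hw : w ≠ 0) (hr : 0 < r) (hp : 0 < p)
    (h : (p + r) * ‖w‖ ≤ |⟪w, c - x⟫|) :
    HyperplaneSeparates w ⟪w, tangentConeVertex c r x p⟫ (ball c r) (ball x p) := by
  have hpr : 0 < p + r := add_pos hp hr
  have scale {q t : ℝ} (hq : 0 < q) (ht : (p + r) * ‖w‖ ≤ t) : q * ‖w‖ ≤ q / (p + r) * t :=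
    calc q * ‖w‖ = q / (p + r) * ((p + r) * ‖w‖) := by field_simp
      _ ≤ q / (p + r) * t := by gcongr
  have inner_c_sub : ⟪w, c⟫ - ⟪w, tangentConeVertex c r x p⟫ = r / (p + r) * ⟪w, c - x⟫ := by
    rw [← inner_sub_right, sub_tangentConeVertex c x hpr.ne', inner_smul_right]
  have inner_sub_x : ⟪w, tangentConeVertex c r x p⟫ - ⟪w, x⟫ = p / (p + r) * ⟪w, c - x⟫ := by
    rw [← inner_sub_right, tangentConeVertex_sub c x hpr.ne', inner_smul_right]
  rw [hyperplaneSeparates_ball_iff hw hr hp, ← neg_sub ⟪w, c⟫, ← neg_sub _ ⟪w, x⟫, inner_c_sub,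
    inner_sub_x, ← mul_neg, ← mul_neg]
  exact (le_abs.mp h).imp (fun ht => ⟨scale hr ht, scale hp ht⟩)
    (fun ht => ⟨scale hr ht, scale hp ht⟩)

theorem div_norm_le_abs_inner_normalized_iff {d : E} (hd : d ≠ 0) (w : E) (a : ℝ) :
    a / ‖d‖ ≤ |⟪w, ‖d‖⁻¹ • d⟫| ↔ a ≤ |⟪w, d⟫| := by
  rw [inner_smul_right, abs_mul, abs_inv, abs_norm, inv_mul_eq_div,
    div_le_div_iff_of_pos_right (norm_pos_iff.mpr hd)]

theorem stmt6_general (hcx : c ≠ x) (hr : 0 < r) (hp : 0 < p) (hw : ‖w‖ = 1) :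
    (HyperplaneSeparates w ⟪w, tangentConeVertex c r x p⟫ (ball c r) (ball x p) ↔
      ∃ b : ℝ, HyperplaneSeparates w b (ball c r) (ball x p)) ∧
    (HyperplaneSeparates w ⟪w, tangentConeVertex c r x p⟫ (ball c r) (ball x p) ↔
      (p + r) / ‖c - x‖ ≤ |⟪w, ‖c - x‖⁻¹ • (c - x)⟫|) := by
  have w_ne : w ≠ 0 := norm_ne_zero_iff.mp (hw ▸ one_ne_zero)
  have gap_of_separates {b : ℝ} (h : HyperplaneSeparates w b (ball c r) (ball x p)) :
      p + r ≤ |⟪w, c - x⟫| := by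
    simpa only [hw, mul_one] using h.le_abs_inner w_ne hr hp
  have vertex_of_gap (h : p + r ≤ |⟪w, c - x⟫|) :
      HyperplaneSeparates w ⟪w, tangentConeVertex c r x p⟫ (ball c r) (ball x p) :=
    hyperplaneSeparates_tangentConeVertex w_ne hr hp (by rwa [hw, mul_one])
  rw [div_norm_le_abs_inner_normalized_iff (sub_ne_zero.mpr hcx)]
  exact ⟨⟨fun h => ⟨_, h⟩, fun ⟨_, h⟩ => vertex_of_gap (gap_of_separates h)⟩,
    gap_of_separates, vertex_of_gap⟩

end InnerProductSpace

theorem stmt6 (n : ℕ) (hn : 2 ≤ n) (c x : EuclideanSpace ℝ (Fin n)) (r p : ℝ)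
    (hr : 0 < r) (hp : 0 < p) (hdist : p + r < ‖c - x‖)
    (v : EuclideanSpace ℝ (Fin n))
    (hv : v = (p / (p + r)) • c + (r / (p + r)) • x)
    (w : EuclideanSpace ℝ (Fin n)) (hw : ‖w‖ = 1) :
    (Separates w ⟪w, v⟫ c r x p ↔ ∃ b : ℝ, Separates w b c r x p) ∧
    (Separates w ⟪w, v⟫ c r x p ↔
      (p + r) / ‖c - x‖ ≤ |⟪w, ‖c - x‖⁻¹ • (c - x)⟫|) := by
  have hcx : c ≠ x := sub_ne_zero.mp (norm_pos_iff.mp ((add_pos hp hr).trans hdist))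
  exact hv ▸ stmt6_general hcx hr hp hw
end

section
/- Let n ≥ 2, let c, x ∈ ℝⁿ and r, p > 0 with |c − x| > p + r, let k ≥ max(|c|, |x|) > 0, and let w ∈ ℝⁿ with |w| = 1. Then the Lebesgue measure of the set {b ∈ [−k, k] : H[w;b] separates B[c,r] and B[x,p]} equals max(|⟪w, c − x⟫| − (p + r), 0); in particular, when it is nonempty this set is an interval entirely contained in [−k, k]. -/
open MeasureTheory Metric Real
open scoped RealInnerProductSpace

/-!
As `u` runs over an open ball `B[c,r]`, the value `⟪w,u⟫` runs over exactly the open interval of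
radius `r * ‖w‖` about `⟪w,c⟫`. Hence `H[w;b]` separates two balls iff `b` lies between their two
intervals, endpoints allowed because the intervals are open. These `b` form the closed interval from
the upper end of the lower interval to the lower end of the upper one. When it is nonempty, it lies
between `⟪w,c⟫` and `⟪w,x⟫`, which gives containment in `[-k,k]`.
-/

section Separation

variable {E : Type*} [NormedAddCommGroup E] [InnerProductSpace ℝ E] {w c x : E} {b r p k : ℝ}

/-- The affine functional `u ↦ ⟪w,u⟫ - b` is positive on one of the sets `s`, `t` and negative on
the other. For balls in Euclidean space this unfolds to `Separates`. -/
def SeparatesSets (w : E) (b : ℝ) (s t : Set E) : Prop :=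
  ((∀ u ∈ s, 0 < ⟪w, u⟫ - b) ∧ (∀ u ∈ t, ⟪w, u⟫ - b < 0)) ∨
  ((∀ u ∈ s, ⟪w, u⟫ - b < 0) ∧ (∀ u ∈ t, 0 < ⟪w, u⟫ - b))

theorem separatesSets_comm {s t : Set E} : SeparatesSets w b s t ↔ SeparatesSets w b t s := by
  simp only [SeparatesSets, and_comm, or_comm]

theorem image_inner_ball (hw : w ≠ 0) (c : E) (r : ℝ) :
    (fun u ↦ ⟪w, u⟫) '' ball c r = Set.Ioo (⟪w, c⟫ - r * ‖w‖) (⟪w, c⟫ + r * ‖w‖) := by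
  have norm_pos : 0 < ‖w‖ := norm_pos_iff.mpr hw
  rw [← Real.ball_eq_Ioo]
  apply Set.Subset.antisymm
  · rintro _ ⟨u, hu, rfl⟩
    rw [mem_ball_iff_norm] at hu ⊢
    calc ‖⟪w, u⟫ - ⟪w, c⟫‖ = ‖⟪w, u - c⟫‖ := by rw [inner_sub_right]
      _ ≤ ‖w‖ * ‖u - c‖ := norm_inner_le_norm w (u - c)
      _ < r * ‖w‖ := by rw [mul_comm]; gcongr
  · intro t ht
    rw [mem_ball_iff_norm] at ht
    refine ⟨c + ((t - ⟪w, c⟫) / ‖w‖ ^ 2) • w, ?_, ?_⟩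
    · rw [mem_ball_iff_norm, add_sub_cancel_left]
      calc ‖((t - ⟪w, c⟫) / ‖w‖ ^ 2) • w‖ = ‖t - ⟪w, c⟫‖ / ‖w‖ := by
            rw [norm_smul, norm_div, norm_pow, norm_norm]; field_simp
        _ < r := (div_lt_iff₀ norm_pos).mpr ht
    · simp only [inner_add_right, inner_smul_right, real_inner_self_eq_norm_sq]
      field_simp
      ring

theorem forall_mem_ball_inner_sub_pos_iff (hw : w ≠ 0) (hr : 0 < r) :
    (∀ u ∈ ball c r, 0 < ⟪w, u⟫ - b) ↔ b ≤ ⟪w, c⟫ - r * ‖w‖ := by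
  have radius_pos : 0 < r * ‖w‖ := mul_pos hr (norm_pos_iff.mpr hw)
  calc (∀ u ∈ ball c r, 0 < ⟪w, u⟫ - b)
      ↔ (fun u ↦ ⟪w, u⟫) '' ball c r ⊆ Set.Ioi b := by
        simp only [Set.subset_def, Set.forall_mem_image, Set.mem_Ioi, sub_pos]
    _ ↔ b ≤ ⟪w, c⟫ - r * ‖w‖ := by
        rw [image_inner_ball hw]
        refine ⟨fun h ↦ ?_, fun h t ht ↦ h.trans_lt ht.1⟩
        exact (isGLB_Ioo (by linarith)).2 fun t ht ↦ (h ht).le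

theorem forall_mem_ball_inner_sub_neg_iff (hw : w ≠ 0) (hr : 0 < r) :
    (∀ u ∈ ball c r, ⟪w, u⟫ - b < 0) ↔ ⟪w, c⟫ + r * ‖w‖ ≤ b := by
  have radius_pos : 0 < r * ‖w‖ := mul_pos hr (norm_pos_iff.mpr hw)
  calc (∀ u ∈ ball c r, ⟪w, u⟫ - b < 0)
      ↔ (fun u ↦ ⟪w, u⟫) '' ball c r ⊆ Set.Iio b := by
        simp only [Set.subset_def, Set.forall_mem_image, Set.mem_Iio, sub_neg]
    _ ↔ ⟪w, c⟫ + r * ‖w‖ ≤ b := by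
        rw [image_inner_ball hw]
        refine ⟨fun h ↦ ?_, fun h t ht ↦ ht.2.trans_le h⟩
        exact (isLUB_Ioo (by linarith)).2 fun t ht ↦ (h ht).le

theorem separatesSets_ball_iff_mem_Icc (hw : w ≠ 0) (hr : 0 < r) (hp : 0 < p)
    (hxc : ⟪w, x⟫ ≤ ⟪w, c⟫) :
    SeparatesSets w b (ball c r) (ball x p) ↔
      b ∈ Set.Icc (⟪w, x⟫ + p * ‖w‖) (⟪w, c⟫ - r * ‖w‖) := by
  have not_reversed : ¬(⟪w, c⟫ + r * ‖w‖ ≤ b ∧ b ≤ ⟪w, x⟫ - p * ‖w‖) := by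
    have := mul_pos hr (norm_pos_iff.mpr hw)
    have := mul_pos hp (norm_pos_iff.mpr hw)
    rintro ⟨lower, upper⟩
    linarith
  rw [SeparatesSets, forall_mem_ball_inner_sub_pos_iff hw hr,
    forall_mem_ball_inner_sub_neg_iff hw hp, forall_mem_ball_inner_sub_neg_iff hw hr,
    forall_mem_ball_inner_sub_pos_iff hw hp, or_iff_left not_reversed, and_comm, Set.mem_Icc]

theorem stmt9_general (hr : 0 < r) (hp : 0 < p) (hw : w ≠ 0) (hk : ‖w‖ * max ‖c‖ ‖x‖ ≤ k) :
    volume {b : ℝ | b ∈ Set.Icc (-k) k ∧ SeparatesSets w b (ball c r) (ball x p)} =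
      ENNReal.ofReal (max (|⟪w, c - x⟫| - (p + r) * ‖w‖) 0) ∧
    {b : ℝ | SeparatesSets w b (ball c r) (ball x p)} ⊆ Set.Icc (-k) k ∧
    {b : ℝ | SeparatesSets w b (ball c r) (ball x p)}.OrdConnected := by
  wlog hxc : ⟪w, x⟫ ≤ ⟪w, c⟫ generalizing c x r p
  · simpa only [separatesSets_comm (s := ball x p), ← neg_sub c x, inner_neg_right, abs_neg,
      add_comm r p] using this hp hr (max_comm ‖c‖ ‖x‖ ▸ hk) (le_of_not_ge hxc)
  have inner_c_le : ⟪w, c⟫ ≤ k :=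
    (real_inner_le_norm w c).trans <| hk.trans' <| by gcongr; exact le_max_left _ _
  have neg_le_inner_x : -k ≤ ⟪w, x⟫ :=
    neg_le_of_abs_le <| (abs_real_inner_le_norm w x).trans <| hk.trans' <| by
      gcongr; exact le_max_right _ _
  have interval_eq : {b | SeparatesSets w b (ball c r) (ball x p)} =
      Set.Icc (⟪w, x⟫ + p * ‖w‖) (⟪w, c⟫ - r * ‖w‖) :=
    Set.ext fun _ ↦ separatesSets_ball_iff_mem_Icc hw hr hp hxc
  have subset_Icc : {b | SeparatesSets w b (ball c r) (ball x p)} ⊆ Set.Icc (-k) k := by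
    rw [interval_eq]
    exact Set.Icc_subset_Icc (le_add_of_le_of_nonneg neg_le_inner_x (by positivity))
      ((sub_le_self _ (by positivity)).trans inner_c_le)
  refine ⟨?_, subset_Icc, interval_eq ▸ Set.ordConnected_Icc⟩
  have length_eq :
      ⟪w, c⟫ - r * ‖w‖ - (⟪w, x⟫ + p * ‖w‖) = |⟪w, c - x⟫| - (p + r) * ‖w‖ := by
    rw [inner_sub_right, abs_of_nonneg (sub_nonneg.mpr hxc)]
    ring
  rw [Set.ofPred_and, Set.ofPred_mem_eq, Set.inter_eq_right.mpr subset_Icc, interval_eq,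
    Real.volume_Icc, length_eq, ENNReal.ofReal_max, ENNReal.ofReal_zero, max_eq_left zero_le]

end Separation

theorem stmt9 (n : ℕ) (hn : 2 ≤ n) (c x : EuclideanSpace ℝ (Fin n)) (r p k : ℝ)
    (hr : 0 < r) (hp : 0 < p) (hdist : p + r < ‖c - x‖)
    (hk : max ‖c‖ ‖x‖ ≤ k) (hk0 : 0 < max ‖c‖ ‖x‖)
    (w : EuclideanSpace ℝ (Fin n)) (hw : ‖w‖ = 1) :
    volume {b : ℝ | b ∈ Set.Icc (-k) k ∧ Separates w b c r x p} =
      ENNReal.ofReal (max (|⟪w, c - x⟫| - (p + r)) 0) ∧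
    ({b : ℝ | Separates w b c r x p}.Nonempty →
      {b : ℝ | Separates w b c r x p} ⊆ Set.Icc (-k) k ∧
      {b : ℝ | Separates w b c r x p}.OrdConnected) := by
  have h := stmt9_general (c := c) (x := x) (k := k) hr hp
    (ne_zero_of_norm_ne_zero (hw ▸ one_ne_zero)) (by rwa [hw, one_mul])
  rw [hw, mul_one] at h
  exact ⟨h.1, fun _ ↦ h.2⟩
end

section
/- Let n ≥ 2 and σ ∈ (0, 1), and set κ = 1 − σ². Then κ^{(n−1)/2} / ( ((n−1)/2) · B((n−1)/2, 1/2) ) − σ · I(κ; (n−1)/2, 1/2) ≤ (1 − σ) · I(κ; (n−1)/2, 1/2) ≤ 1 − σ. (Consequently, with σ = (p+r)/(p+r+δ), the probability that a fully random hyperplane separates the two balls is at most δ/(2k).) -/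
open MeasureTheory Real

/-- The Beta function `B(y,z) = Γ(y)Γ(z)/Γ(y+z)`. -/
noncomputable def realBeta (y z : ℝ) : ℝ := Gamma y * Gamma z / Gamma (y + z)

/-- The regularized incomplete beta function `I(κ; y, z)`. -/
noncomputable def regIncBeta (κ y z : ℝ) : ℝ :=
  (∫ s in (0:ℝ)..κ, s ^ (y - 1) * (1 - s) ^ (z - 1)) / realBeta y z

/-!
After moving `σ * I(κ; y, z)` to the other side, the two inequalities become the `σ`-free bounds
`κ ^ y / (y * B(y, z)) ≤ I(κ; y, z) ≤ 1`. The lower one holds because `(1 - s) ^ (z - 1) ≥ 1` for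
`z ≤ 1`, so that the integrand dominates `s ^ (y - 1)`; the upper one because `I` is increasing in
`κ` with `I(1; y, z) = 1`.
-/

section

variable {y z κ : ℝ}

lemma ofReal_rpow_mul_one_sub_rpow (y z : ℝ) {s : ℝ} (hs : s ∈ Set.Icc (0 : ℝ) 1) :
    ((s ^ (y - 1) * (1 - s) ^ (z - 1) : ℝ) : ℂ) =
      (s : ℂ) ^ ((y : ℂ) - 1) * (1 - (s : ℂ)) ^ ((z : ℂ) - 1) := by
  rw [Complex.ofReal_mul, Complex.ofReal_cpow hs.1, Complex.ofReal_cpow (sub_nonneg.2 hs.2)]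
  push_cast
  rfl

lemma rpow_mul_one_sub_rpow_nonneg (y z : ℝ) {s : ℝ} (hs : s ∈ Set.Icc (0 : ℝ) 1) :
    0 ≤ s ^ (y - 1) * (1 - s) ^ (z - 1) :=
  mul_nonneg (rpow_nonneg hs.1 _) (rpow_nonneg (sub_nonneg.2 hs.2) _)

lemma intervalIntegrable_rpow_mul_one_sub_rpow (hy : 0 < y) (hz : 0 < z) {a b : ℝ}
    (ha : a ∈ Set.Icc (0 : ℝ) 1) (hb : b ∈ Set.Icc (0 : ℝ) 1) :
    IntervalIntegrable (fun s : ℝ ↦ s ^ (y - 1) * (1 - s) ^ (z - 1)) volume a b := by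
  have hconv := Complex.betaIntegral_convergent (u := y) (v := z) (by simpa) (by simpa)
  refine (hconv.norm.congr_uIoo fun s hs ↦ ?_).mono_set <|
    Set.uIcc_subset_uIcc (Set.Icc_subset_uIcc ha) (Set.Icc_subset_uIcc hb)
  rw [Set.uIoo_of_le zero_le_one] at hs
  have hs' := Set.Ioo_subset_Icc_self hs
  rw [← ofReal_rpow_mul_one_sub_rpow y z hs',
    Complex.norm_of_nonneg (rpow_mul_one_sub_rpow_nonneg y z hs')]

lemma integral_rpow_mul_one_sub_rpow (hy : 0 < y) (hz : 0 < z) :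
    ∫ s in (0 : ℝ)..1, s ^ (y - 1) * (1 - s) ^ (z - 1) = realBeta y z := by
  have hbeta : Complex.betaIntegral y z =
      ((∫ s in (0 : ℝ)..1, s ^ (y - 1) * (1 - s) ^ (z - 1) : ℝ) : ℂ) := by
    rw [Complex.betaIntegral, ← intervalIntegral.integral_ofReal]
    refine intervalIntegral.integral_congr fun s hs ↦ ?_
    rw [Set.uIcc_of_le zero_le_one] at hs
    exact (ofReal_rpow_mul_one_sub_rpow y z hs).symm
  calc ∫ s in (0 : ℝ)..1, s ^ (y - 1) * (1 - s) ^ (z - 1)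
      = (Complex.betaIntegral y z).re := by rw [hbeta, Complex.ofReal_re]
    _ = realBeta y z := (ProbabilityTheory.beta_eq_betaIntegralReal y z hy hz).symm

lemma realBeta_pos (hy : 0 < y) (hz : 0 < z) : 0 < realBeta y z :=
  ProbabilityTheory.beta_pos hy hz

lemma regIncBeta_one (hy : 0 < y) (hz : 0 < z) : regIncBeta 1 y z = 1 := by
  rw [regIncBeta, integral_rpow_mul_one_sub_rpow hy hz, div_self (realBeta_pos hy hz).ne']

lemma monotoneOn_regIncBeta (hy : 0 < y) (hz : 0 < z) :
    MonotoneOn (fun κ ↦ regIncBeta κ y z) (Set.Icc 0 1) := by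
  intro κ hκ κ' hκ' hle
  refine div_le_div_of_nonneg_right ?_ (realBeta_pos hy hz).le
  refine intervalIntegral.integral_mono_interval le_rfl hκ.1 hle ?_
    (intervalIntegrable_rpow_mul_one_sub_rpow hy hz (Set.left_mem_Icc.2 zero_le_one) hκ')
  filter_upwards [ae_restrict_mem measurableSet_Ioc] with s hs
  exact rpow_mul_one_sub_rpow_nonneg y z ⟨hs.1.le, hs.2.trans hκ'.2⟩

lemma regIncBeta_le_one (hy : 0 < y) (hz : 0 < z) (hκ : κ ∈ Set.Icc (0 : ℝ) 1) :
    regIncBeta κ y z ≤ 1 :=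
  (monotoneOn_regIncBeta hy hz hκ (Set.right_mem_Icc.2 zero_le_one) hκ.2).trans_eq
    (regIncBeta_one hy hz)

lemma rpow_div_le_integral_rpow_mul_one_sub_rpow (hy : 0 < y) (hz : 0 < z) (hz1 : z ≤ 1)
    (hκ : κ ∈ Set.Icc (0 : ℝ) 1) :
    κ ^ y / y ≤ ∫ s in (0 : ℝ)..κ, s ^ (y - 1) * (1 - s) ^ (z - 1) := by
  have hpow : ∫ s in (0 : ℝ)..κ, s ^ (y - 1) = κ ^ y / y := by
    rw [integral_rpow (Or.inl (by linarith)), sub_add_cancel, zero_rpow hy.ne', sub_zero]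
  rw [← hpow]
  refine intervalIntegral.integral_mono_on_of_le_Ioo hκ.1
    (intervalIntegral.intervalIntegrable_rpow' (by linarith))
    (intervalIntegrable_rpow_mul_one_sub_rpow hy hz (Set.left_mem_Icc.2 zero_le_one) hκ)
    fun s hs ↦ ?_
  have hone_le : 1 ≤ (1 - s) ^ (z - 1) :=
    one_le_rpow_of_pos_of_le_one_of_nonpos (by linarith [hs.2, hκ.2]) (by linarith [hs.1])
      (by linarith)
  exact le_mul_of_one_le_right (rpow_nonneg hs.1.le _) hone_le

lemma rpow_div_le_regIncBeta (hy : 0 < y) (hz : 0 < z) (hz1 : z ≤ 1)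
    (hκ : κ ∈ Set.Icc (0 : ℝ) 1) :
    κ ^ y / (y * realBeta y z) ≤ regIncBeta κ y z := by
  rw [← div_div]
  exact div_le_div_of_nonneg_right (rpow_div_le_integral_rpow_mul_one_sub_rpow hy hz hz1 hκ)
    (realBeta_pos hy hz).le

theorem stmt15_general (hy : 0 < y) (hz : 0 < z) (hz1 : z ≤ 1) (hκ : κ ∈ Set.Icc (0 : ℝ) 1)
    {σ : ℝ} (hσ : σ ≤ 1) :
    κ ^ y / (y * realBeta y z) - σ * regIncBeta κ y z ≤ (1 - σ) * regIncBeta κ y z ∧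
      (1 - σ) * regIncBeta κ y z ≤ 1 - σ := by
  constructor
  · linarith [rpow_div_le_regIncBeta hy hz hz1 hκ]
  · exact mul_le_of_le_one_right (sub_nonneg.2 hσ) (regIncBeta_le_one hy hz hκ)

end

theorem stmt15 (n : ℕ) (hn : 2 ≤ n) (σ : ℝ) (hσ : σ ∈ Set.Ioo (0:ℝ) 1)
    (κ : ℝ) (hκ : κ = 1 - σ ^ 2) :
    κ ^ (((n : ℝ) - 1) / 2) /
          ((((n : ℝ) - 1) / 2) * realBeta (((n : ℝ) - 1) / 2) (1 / 2)) -
        σ * regIncBeta κ (((n : ℝ) - 1) / 2) (1 / 2) ≤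
      (1 - σ) * regIncBeta κ (((n : ℝ) - 1) / 2) (1 / 2) ∧
    (1 - σ) * regIncBeta κ (((n : ℝ) - 1) / 2) (1 / 2) ≤ 1 - σ := by
  have hn' : (1 : ℝ) < n := by exact_mod_cast hn
  have hκ01 : κ ∈ Set.Icc (0 : ℝ) 1 := by constructor <;> nlinarith [hσ.1, hσ.2]
  exact stmt15_general (by linarith) (by norm_num) (by norm_num) hκ01 hσ.2.le
end
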